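/- Let V be a real inner product space with inner product ⟪·,·⟫ and norm ‖·‖, and let a : V × V → ℝ be a bilinear form that is symmetric and positive semidefinite (a(v,v) ≥ 0 for all v). Let Δt > 0, let k ≥ 1 be an integer, let ξ⁰, ξ¹, …, ξᵏ ∈ V with ξ⁰ = 0, and let ρ¹, …, ρᵏ ∈ V. Suppose that for every n ∈ {1, …, k} and every v ∈ V, ⟪(ξⁿ − ξⁿ⁻¹)/Δt, v⟫ + ½ a(ξⁿ + ξⁿ⁻¹, v) = ⟪ρⁿ, v⟫. Then Δt ∑_{n=1}^{k} ‖(ξⁿ − ξⁿ⁻¹)/Δt‖² + a(ξᵏ, ξᵏ) ≤ Δt ∑_{n=1}^{k} ‖ρⁿ‖². -/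

import Mathlib

open scoped RealInnerProductSpace

/-!
Testing the scheme with the difference quotient `d = (ξⁿ − ξⁿ⁻¹)/Δt` itself makes the symmetric
form telescope, `a(ξⁿ + ξⁿ⁻¹, ξⁿ − ξⁿ⁻¹) = a(ξⁿ, ξⁿ) − a(ξⁿ⁻¹, ξⁿ⁻¹)`, while Cauchy–Schwarz and
Young bound `⟪ρⁿ, d⟫` by `½‖ρⁿ‖² + ½‖d‖²`. Absorbing the last term gives the one-step estimate
`energy_step`, and summing it over the time levels from `ξ⁰ = 0` gives the theorem.
-/

/-- Energy estimate for a single Crank–Nicolson step from `y` to `x`. -/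
lemma energy_step {V : Type*} [NormedAddCommGroup V] [InnerProductSpace ℝ V]
    (a : V →ₗ[ℝ] V →ₗ[ℝ] ℝ) (hsymm : ∀ u v : V, a u v = a v u)
    (Δt : ℝ) (hΔt : 0 < Δt) (x y r : V)
    (h : ∀ v : V, ⟪Δt⁻¹ • (x - y), v⟫ + (1/2) * a (x + y) v = ⟪r, v⟫) :
    Δt * ‖Δt⁻¹ • (x - y)‖ ^ 2 + a x x - a y y ≤ Δt * ‖r‖ ^ 2 := by
  set d := Δt⁻¹ • (x - y) with hd
  have hxy : x - y = Δt • d := by rw [hd, smul_inv_smul₀ hΔt.ne']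
  have htel : Δt * a (x + y) d = a x x - a y y := by
    rw [← smul_eq_mul, ← map_smul, ← hxy]
    simp only [map_add, map_sub, LinearMap.add_apply]
    linarith [hsymm x y]
  have h1 := h d
  rw [real_inner_self_eq_norm_sq] at h1
  -- Young's inequality, as the nonnegativity of `‖r - d‖²`.
  have h2 : 2 * ⟪r, d⟫ ≤ ‖r‖ ^ 2 + ‖d‖ ^ 2 := by
    linarith [norm_sub_sq_real r d, sq_nonneg ‖r - d‖]
  have h3 : ‖d‖ ^ 2 + a (x + y) d ≤ ‖r‖ ^ 2 := by linarith
  have h4 := mul_le_mul_of_nonneg_left h3 hΔt.le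
  rw [mul_add, htel] at h4
  linarith

/-- Discrete energy-stability estimate for the Crank–Nicolson scheme
with a symmetric positive semidefinite bilinear form. -/
theorem stmt_3 {V : Type*} [NormedAddCommGroup V] [InnerProductSpace ℝ V]
    (a : V →ₗ[ℝ] V →ₗ[ℝ] ℝ)
    (hsymm : ∀ u v : V, a u v = a v u)
    (hpos : ∀ v : V, 0 ≤ a v v)
    (Δt : ℝ) (hΔt : 0 < Δt) (k : ℕ) (hk : 1 ≤ k)
    (ξ ρ : ℕ → V) (hξ0 : ξ 0 = 0)
    (heq : ∀ n ∈ Finset.Icc 1 k, ∀ v : V,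
      ⟪Δt⁻¹ • (ξ n - ξ (n - 1)), v⟫ + (1/2) * a (ξ n + ξ (n - 1)) v = ⟪ρ n, v⟫) :
    Δt * ∑ n ∈ Finset.Icc 1 k, ‖Δt⁻¹ • (ξ n - ξ (n - 1))‖ ^ 2 + a (ξ k) (ξ k)
      ≤ Δt * ∑ n ∈ Finset.Icc 1 k, ‖ρ n‖ ^ 2 := by
  clear hk
  induction k with
  | zero => simp [hξ0]
  | succ m ih =>
    have ih' := ih fun n hn => heq n (Finset.Icc_subset_Icc_right m.le_succ hn)
    have hs := energy_step a hsymm Δt hΔt _ _ _ (heq (m + 1) (by simp))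
    rw [Finset.sum_Icc_succ_top (by omega), Finset.sum_Icc_succ_top (by omega), mul_add, mul_add]
    simp only [Nat.add_sub_cancel] at hs ⊢
    linarith
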